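/- For every real z with 0 ≤ z < 1 one has √z · ∑_{n=0}^∞ (n!)²(1/2)ₙ/((3/2)ₙ)² · (−z)ⁿ/n! = −Li₂(1/(√z+√(z+1))) + Li₂(−1/(√z+√(z+1))) + log(√z+√(z+1))·log((√z+√(z+1)−1)/(√z+√(z+1)+1)) + π²/4. -/

import Mathlib

noncomputable def poch (a : ℝ) (n : ℕ) : ℝ := ∏ i ∈ Finset.range n, (a + i)

/-- Dilogarithm `Li₂(x) = ∑_{k ≥ 1} x^k / k²`. -/
noncomputable def Li2 (x : ℝ) : ℝ := ∑' k : ℕ, x ^ (k + 1) / ((k : ℝ) + 1)^2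

open Set Filter Topology

lemma poch_succ (a : ℝ) (n : ℕ) : poch a (n + 1) = poch a n * (a + n) :=
  Finset.prod_range_succ _ _

lemma poch_pos {a : ℝ} (ha : 0 < a) (n : ℕ) : 0 < poch a n :=
  Finset.prod_pos fun i _ => by positivity

lemma poch_one_eq_factorial (n : ℕ) : poch 1 n = n.factorial := by
  induction n with
  | zero => simp [poch]
  | succ k ih => rw [poch_succ, ih, Nat.factorial_succ]; push_cast; ring

lemma poch_three_halves (n : ℕ) : poch (3 / 2) n = (2 * n + 1) * poch (1 / 2) n := by
  induction n with
  | zero => simp [poch]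
  | succ k ih => rw [poch_succ, poch_succ, ih]; push_cast; ring

/-- Coefficient of `x ^ (2 * n + 1)` in the expansion of `arsinh x / √(1 + x ^ 2)`. -/
noncomputable def arsinhDivCoeff (n : ℕ) : ℝ := (-1) ^ n * n.factorial / poch (3 / 2) n

lemma arsinhDivCoeff_succ (n : ℕ) :
    (2 * (n : ℝ) + 3) * arsinhDivCoeff (n + 1) = -((2 * n + 2) * arsinhDivCoeff n) := by
  have h := (poch_pos (a := 3 / 2) (by norm_num) n).ne'
  have h2 : (3 / 2 + n : ℝ) ≠ 0 := by positivity
  simp only [arsinhDivCoeff, poch_succ, Nat.factorial_succ, pow_succ]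
  push_cast
  field_simp
  ring

lemma abs_arsinhDivCoeff_le_one (n : ℕ) : |arsinhDivCoeff n| ≤ 1 := by
  induction n with
  | zero => simp [arsinhDivCoeff, poch]
  | succ k ih =>
    have h := congrArg abs (arsinhDivCoeff_succ k)
    rw [abs_neg, abs_mul, abs_mul, abs_of_pos (by positivity : (0 : ℝ) < 2 * k + 3),
      abs_of_pos (by positivity : (0 : ℝ) < 2 * k + 2)] at h
    have hk : (0 : ℝ) ≤ k := k.cast_nonneg
    nlinarith

lemma summable_two_mul_add_one_mul_pow {r : ℝ} (h0 : 0 ≤ r) (h1 : r < 1) :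
    Summable fun n : ℕ => (2 * (n : ℝ) + 1) * r ^ n := by
  have hr : ‖r‖ < 1 := by rwa [Real.norm_of_nonneg h0]
  have := ((summable_pow_mul_geometric_of_norm_lt_one 1 hr).mul_left 2).add
    (summable_geometric_of_norm_lt_one hr)
  refine this.congr fun n => ?_
  ring

lemma norm_mul_pow_le {a : ℕ → ℝ} {d : ℕ → ℕ} (hd : ∀ n, n ≤ d n)
    (ha : ∀ n, |a n| ≤ 2 * n + 1) {r y : ℝ} (hr : r ≤ 1) (hy : |y| ≤ r) (n : ℕ) :
    ‖a n * y ^ d n‖ ≤ (2 * n + 1) * r ^ n := by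
  rw [norm_mul, norm_pow, Real.norm_eq_abs, Real.norm_eq_abs]
  have hr0 := (abs_nonneg y).trans hy
  have h : |y| ^ d n ≤ r ^ n :=
    (pow_le_pow_left₀ (abs_nonneg y) hy _).trans (pow_le_pow_of_le_one hr0 hr (hd n))
  exact mul_le_mul (ha n) h (by positivity) (by positivity)

lemma summable_mul_pow {a : ℕ → ℝ} {d : ℕ → ℕ} (hd : ∀ n, n ≤ d n)
    (ha : ∀ n, |a n| ≤ 2 * n + 1) {x : ℝ} (hx : |x| < 1) :
    Summable fun n => a n * x ^ d n :=
  .of_norm_bounded (summable_two_mul_add_one_mul_pow (abs_nonneg x) hx)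
    (norm_mul_pow_le hd ha hx.le le_rfl)

/-- Termwise differentiation of a lacunary power series on the unit interval. -/
lemma hasDerivAt_tsum_div_mul_pow {a : ℕ → ℝ} {d : ℕ → ℕ} (hd : ∀ n, n ≤ d n)
    (ha : ∀ n, |a n| ≤ 2 * n + 1) {x : ℝ} (hx : |x| < 1) :
    HasDerivAt (fun y : ℝ => ∑' n, a n / ((d n : ℝ) + 1) * y ^ (d n + 1))
      (∑' n, a n * x ^ d n) x := by
  obtain ⟨r, hxr, hr⟩ := exists_between hx
  have hr0 := (abs_nonneg x).trans_lt hxr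
  refine hasDerivAt_tsum_of_isPreconnected (t := Ioo (-r) r) (y₀ := 0)
    (g' := fun n y => a n * y ^ d n)
    (summable_two_mul_add_one_mul_pow hr0.le hr) isOpen_Ioo isPreconnected_Ioo ?_ ?_ ?_ ?_ ?_
  · intro n y _
    have h : ((d n : ℝ) + 1) ≠ 0 := by positivity
    refine ((hasDerivAt_pow (d n + 1) y).const_mul _).congr_deriv ?_
    push_cast
    field_simp
  · intro n y hy
    exact norm_mul_pow_le hd ha hr.le (abs_lt.2 hy).le n
  · simpa using hr0
  · simp
  · exact abs_lt.1 hxr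

lemma arsinh_div_ode {x : ℝ} (hx : |x| < 1) :
    (1 + x ^ 2) * (∑' n : ℕ, (2 * (n : ℝ) + 1) * arsinhDivCoeff n * x ^ (2 * n))
      + x * ∑' n, arsinhDivCoeff n * x ^ (2 * n + 1) = 1 := by
  have hb (n : ℕ) : |(2 * (n : ℝ) + 1) * arsinhDivCoeff n| ≤ 2 * n + 1 := by
    rw [abs_mul, abs_of_pos (by positivity)]
    exact mul_le_of_le_one_right (by positivity) (abs_arsinhDivCoeff_le_one n)
  have hb' (n : ℕ) : |arsinhDivCoeff n| ≤ 2 * n + 1 :=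
    (abs_arsinhDivCoeff_le_one n).trans (by linarith [n.cast_nonneg (α := ℝ)])
  have h1 := summable_mul_pow (d := fun n => 2 * n) (fun n => by omega) hb hx
  have h2 := summable_mul_pow (d := fun n => 2 * n + 1) (fun n => by omega) hb' hx
  have e : (∑' n : ℕ, (2 * (n : ℝ) + 1) * arsinhDivCoeff n * x ^ (2 * n))
      = 1 - (x ^ 2 * (∑' n : ℕ, (2 * (n : ℝ) + 1) * arsinhDivCoeff n * x ^ (2 * n))
      + x * ∑' n, arsinhDivCoeff n * x ^ (2 * n + 1)) := by
    conv_lhs => rw [h1.tsum_eq_zero_add]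
    rw [← tsum_mul_left, ← tsum_mul_left, ← (h1.mul_left _).tsum_add (h2.mul_left _),
      sub_eq_add_neg, ← tsum_neg]
    congr 1
    · simp [arsinhDivCoeff, poch]
    · refine tsum_congr fun n => ?_
      have := arsinhDivCoeff_succ n
      push_cast
      rw [show (2 * ((n : ℝ) + 1) + 1) * arsinhDivCoeff (n + 1)
        = -((2 * n + 2) * arsinhDivCoeff n) by rw [← this]; ring]
      ring
  linarith

/-- A function continuous on `[0, t]` whose derivative vanishes inside agrees at the endpoints. -/
lemma eq_of_hasDerivAt_zero_Ioo {f : ℝ → ℝ} {t : ℝ} (ht : 0 ≤ t)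
    (hf : ContinuousOn f (Icc 0 t)) (hd : ∀ s ∈ Ioo 0 t, HasDerivAt f 0 s) : f t = f 0 := by
  rcases ht.eq_or_lt with rfl | ht
  · rfl
  obtain ⟨s, -, h⟩ := exists_hasDerivAt_eq_slope f (fun _ => 0) ht hf hd
  rw [eq_div_iff (by linarith)] at h
  linarith

lemma tsum_arsinhDivCoeff_mul_cosh {t : ℝ} (ht : 0 ≤ t) (h1 : Real.sinh t < 1) :
    (∑' n, arsinhDivCoeff n * Real.sinh t ^ (2 * n + 1)) * Real.cosh t = t := by
  have hb (n : ℕ) : |(2 * (n : ℝ) + 1) * arsinhDivCoeff n| ≤ 2 * n + 1 := by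
    rw [abs_mul, abs_of_pos (by positivity)]
    exact mul_le_of_le_one_right (by positivity) (abs_arsinhDivCoeff_le_one n)
  have hd : ∀ s ∈ Icc 0 t, HasDerivAt (fun s =>
      (∑' n, arsinhDivCoeff n * Real.sinh s ^ (2 * n + 1)) * Real.cosh s - s) 0 s := by
    intro s hs
    have hs1 : |Real.sinh s| < 1 := by
      rw [abs_of_nonneg (Real.sinh_nonneg_iff.2 hs.1)]
      exact (Real.sinh_le_sinh.2 hs.2).trans_lt h1
    have key := hasDerivAt_tsum_div_mul_pow (d := fun n => 2 * n) (fun n => by omega) hb hs1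
    have e : (fun y : ℝ => ∑' n : ℕ, (2 * (n : ℝ) + 1) * arsinhDivCoeff n
        / (((2 * n : ℕ) : ℝ) + 1) * y ^ (2 * n + 1))
        = fun y => ∑' n, arsinhDivCoeff n * y ^ (2 * n + 1) := by
      funext y
      refine tsum_congr fun n => ?_
      have : (2 * (n : ℝ) + 1) ≠ 0 := by positivity
      push_cast
      field_simp
    simp only [e] at key
    refine (((key.comp s (Real.hasDerivAt_sinh s)).mul (Real.hasDerivAt_cosh s)).sub
      (hasDerivAt_id s)).congr_deriv ?_
    have ode := arsinh_div_ode hs1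
    rw [show 1 + Real.sinh s ^ 2 = Real.cosh s ^ 2 by rw [Real.cosh_sq]; ring] at ode
    simp only [Function.comp]
    linear_combination ode
  have := eq_of_hasDerivAt_zero_Ioo ht (fun s hs => (hd s hs).continuousAt.continuousWithinAt)
    (fun s hs => hd s (Ioo_subset_Icc_self hs))
  simp at this
  linarith

lemma summable_one_div_succ_sq : Summable fun k : ℕ => 1 / ((k : ℝ) + 1) ^ 2 := by
  have := (summable_nat_add_iff 1).2 hasSum_zeta_two.summable
  simpa using this

lemma Li2_one : Li2 1 = Real.pi ^ 2 / 6 := by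
  have h := hasSum_zeta_two.summable.tsum_eq_zero_add
  rw [hasSum_zeta_two.tsum_eq] at h
  simp [Li2, h]

lemma continuousOn_Li2 : ContinuousOn Li2 (Icc (-1) 1) := by
  refine continuousOn_tsum (fun k => by fun_prop) summable_one_div_succ_sq fun k x hx => ?_
  rw [norm_div, norm_pow, Real.norm_eq_abs, Real.norm_of_nonneg (by positivity)]
  gcongr
  exact pow_le_one₀ (abs_nonneg x) (abs_le.2 hx)

lemma Li2_neg_one : Li2 (-1) = -(Real.pi ^ 2 / 12) := by
  have hs := summable_one_div_succ_sq
  have hn : Summable fun k : ℕ => (-1 : ℝ) ^ (k + 1) / ((k : ℝ) + 1) ^ 2 :=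
    .of_norm_bounded hs fun k => by
      rw [norm_div, norm_pow, norm_neg, norm_one, one_pow, Real.norm_of_nonneg (by positivity)]
  have e1 : Li2 1 = ∑' k : ℕ, 1 / ((k : ℝ) + 1) ^ 2 := by simp [Li2]
  have h : Li2 1 + Li2 (-1) = Li2 1 / 2 := by
    set f : ℕ → ℝ := fun k => 1 / ((k : ℝ) + 1) ^ 2 + (-1 : ℝ) ^ (k + 1) / ((k : ℝ) + 1) ^ 2
      with hf
    have hsum : Summable f := hs.add hn
    have e2 : Li2 1 + Li2 (-1) = ∑' k, f k := by
      rw [e1, Li2, ← hs.tsum_add hn]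
    rw [e2, ← tsum_even_add_odd
      (hsum.comp_injective (i := fun k => 2 * k) fun a b h => by simpa using h)
      (hsum.comp_injective (i := fun k => 2 * k + 1) fun a b h => by simpa using h),
      e1, ← tsum_div_const]
    have h0 (k : ℕ) : f (2 * k) = 0 := by
      simp only [hf]
      rw [pow_succ (-1 : ℝ), pow_mul (-1 : ℝ)]
      norm_num
      ring
    simp only [h0, tsum_zero, zero_add]
    refine tsum_congr fun k => ?_
    have : ((k : ℝ) + 1) ≠ 0 := by positivity
    simp only [hf]
    rw [show 2 * k + 1 + 1 = 2 * (k + 1) by ring, pow_mul]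
    push_cast
    rw [show (2 * (k : ℝ) + 1 + 1) = 2 * (k + 1) by ring]
    norm_num
    field_simp
    norm_num
  rw [Li2_one] at h
  linarith

lemma hasDerivAt_Li2 {x : ℝ} (hx : |x| < 1) (h0 : x ≠ 0) :
    HasDerivAt Li2 (-Real.log (1 - x) / x) x := by
  have hb (n : ℕ) : |1 / ((n : ℝ) + 1)| ≤ 2 * n + 1 := by
    rw [abs_of_pos (by positivity), div_le_iff₀ (by positivity)]
    nlinarith [n.cast_nonneg (α := ℝ)]
  have key := hasDerivAt_tsum_div_mul_pow (d := fun n => n) (fun n => le_rfl) hb hx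
  convert key using 1
  · funext y
    refine tsum_congr fun n => ?_
    field_simp
  · rw [div_eq_iff h0, ← (Real.hasSum_pow_div_log_of_abs_lt_one hx).tsum_eq, ← tsum_mul_right]
    refine tsum_congr fun n => ?_
    ring

lemma hasDerivAt_Li2_exp_neg {t : ℝ} (ht : 0 < t) :
    HasDerivAt (fun s => Li2 (Real.exp (-s)) - Li2 (-Real.exp (-s)))
      (Real.log ((Real.exp t - 1) / (Real.exp t + 1))) t := by
  set u := Real.exp (-t) with hu
  have hu0 : 0 < u := Real.exp_pos _
  have hu1 : u < 1 := by rw [hu, Real.exp_lt_one_iff]; linarith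
  have hexp : HasDerivAt (fun s => Real.exp (-s)) (-u) t := by
    simpa using (hasDerivAt_neg t).exp
  have h1 := (hasDerivAt_Li2 (x := u) (by rwa [abs_of_pos hu0]) hu0.ne').comp t hexp
  have h2 := (hasDerivAt_Li2 (x := -u) (by rwa [abs_neg, abs_of_pos hu0])
    (neg_ne_zero.2 hu0.ne')).comp t hexp.neg
  refine (h1.sub h2).congr_deriv ?_
  have : (Real.exp t - 1) / (Real.exp t + 1) = (1 - u) / (1 + u) := by
    rw [hu, Real.exp_neg]
    have := Real.exp_pos t
    field_simp
  rw [this, Real.log_div (by linarith) (by linarith), sub_neg_eq_add]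
  field_simp

lemma continuousOn_mul_log_tanh_half :
    ContinuousOn (fun t : ℝ => t * Real.log ((Real.exp t - 1) / (Real.exp t + 1))) (Ici 0) := by
  intro t ht
  rcases (mem_Ici.1 ht).eq_or_lt with rfl | ht
  · have hlo : Tendsto (fun t : ℝ => t * Real.log t - t * Real.log (Real.exp t + 1))
        (𝓝[Ici 0] 0) (𝓝 0) := by
      have hc : ContinuousAt (fun t : ℝ => t * Real.log t - t * Real.log (Real.exp t + 1)) 0 := by
        refine Real.continuous_mul_log.continuousAt.sub
          (continuousAt_id.mul (ContinuousAt.log (by fun_prop) ?_))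
        positivity
      simpa using hc.tendsto.mono_left nhdsWithin_le_nhds
    rw [ContinuousWithinAt, zero_mul]
    refine tendsto_of_tendsto_of_tendsto_of_le_of_le' hlo tendsto_const_nhds ?_ ?_
    · filter_upwards [self_mem_nhdsWithin] with s hs
      rcases (mem_Ici.1 hs).eq_or_lt with rfl | hs
      · simp
      have h := Real.add_one_le_exp s
      rw [Real.log_div (by linarith) (by positivity), ← mul_sub]
      gcongr
      linarith
    · filter_upwards [self_mem_nhdsWithin] with s hs
      have h := Real.add_one_le_exp s
      have hs' := mem_Ici.1 hs
      refine mul_nonpos_of_nonneg_of_nonpos hs' (Real.log_nonpos ?_ ?_)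
      · exact div_nonneg (by linarith) (by positivity)
      · rw [div_le_one (by positivity)]
        linarith
  · have h := Real.add_one_le_exp t
    refine ContinuousAt.continuousWithinAt (continuousAt_id.mul (ContinuousAt.log ?_ ?_))
    · exact ContinuousAt.div (by fun_prop) (by fun_prop) (by positivity)
    · exact div_ne_zero (by linarith) (by positivity)

lemma hasDerivAt_mul_log_tanh_half {t : ℝ} (ht : 0 < t) :
    HasDerivAt (fun t : ℝ => t * Real.log ((Real.exp t - 1) / (Real.exp t + 1)))
      (Real.log ((Real.exp t - 1) / (Real.exp t + 1)) + t / Real.sinh t) t := by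
  have h := Real.add_one_le_exp t
  have hm : Real.exp t - 1 ≠ 0 := by linarith
  have hp : Real.exp t + 1 ≠ 0 := by positivity
  have he := Real.hasDerivAt_exp t
  refine ((hasDerivAt_id t).mul (((he.sub_const 1).div (he.add_const 1) hp).log
    (div_ne_zero hm hp))).congr_deriv ?_
  have hs : Real.sinh t = (Real.exp t - 1) * (Real.exp t + 1) / (2 * Real.exp t) := by
    rw [Real.sinh_eq, Real.exp_neg]
    field_simp
    ring
  rw [hs]
  simp only [id, one_mul, Pi.div_apply]
  field_simp
  ring

lemma tsum_arsinhDivCoeff_div_eq {t : ℝ} (ht : 0 ≤ t) (h1 : Real.sinh t < 1) :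
    ∑' n : ℕ, arsinhDivCoeff n / (((2 * n : ℕ) : ℝ) + 1) * Real.sinh t ^ (2 * n + 1) =
      -Li2 (Real.exp (-t)) + Li2 (-Real.exp (-t))
        + t * Real.log ((Real.exp t - 1) / (Real.exp t + 1)) + Real.pi ^ 2 / 4 := by
  have hb (n : ℕ) : |arsinhDivCoeff n| ≤ 2 * n + 1 :=
    (abs_arsinhDivCoeff_le_one n).trans (by linarith [n.cast_nonneg (α := ℝ)])
  have hF : ∀ s ∈ Icc 0 t, HasDerivAt
      (fun s => ∑' n : ℕ, arsinhDivCoeff n / (((2 * n : ℕ) : ℝ) + 1) * Real.sinh s ^ (2 * n + 1))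
      ((∑' n, arsinhDivCoeff n * Real.sinh s ^ (2 * n)) * Real.cosh s) s := by
    intro s hs
    have hs1 : |Real.sinh s| < 1 := by
      rw [abs_of_nonneg (Real.sinh_nonneg_iff.2 hs.1)]
      exact (Real.sinh_le_sinh.2 hs.2).trans_lt h1
    exact (hasDerivAt_tsum_div_mul_pow (d := fun n => 2 * n) (fun n => by omega) hb hs1).comp s
      (Real.hasDerivAt_sinh s)
  have hL : ContinuousOn (fun s => Li2 (Real.exp (-s)) - Li2 (-Real.exp (-s))) (Icc 0 t) := by
    have hm (s : ℝ) (hs : s ∈ Icc 0 t) : 0 < Real.exp (-s) ∧ Real.exp (-s) ≤ 1 :=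
      ⟨Real.exp_pos _, Real.exp_le_one_iff.2 (neg_nonpos.2 hs.1)⟩
    refine (continuousOn_Li2.comp (by fun_prop) fun s hs => ?_).sub
      (continuousOn_Li2.comp (by fun_prop) fun s hs => ?_)
    · constructor <;> linarith [hm s hs]
    · constructor <;> linarith [hm s hs]
  have hM := continuousOn_mul_log_tanh_half.mono (Icc_subset_Ici_self : Icc 0 t ⊆ Ici 0)
  have hFc : ContinuousOn _ (Icc 0 t) :=
    fun s hs => (hF s hs).continuousAt.continuousWithinAt
  have := eq_of_hasDerivAt_zero_Ioo ht ((hFc.add hL).sub hM) fun s hs => by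
    refine (((hF s (Ioo_subset_Icc_self hs)).add (hasDerivAt_Li2_exp_neg hs.1)).sub
      (hasDerivAt_mul_log_tanh_half hs.1)).congr_deriv ?_
    have hs0 := Real.sinh_pos_iff.2 hs.1
    have h := tsum_arsinhDivCoeff_mul_cosh hs.1.le ((Real.sinh_lt_sinh.2 hs.2).trans h1)
    simp only [pow_succ, ← mul_assoc, tsum_mul_right] at h
    rw [mul_right_comm, eq_comm, ← div_eq_iff hs0.ne'] at h
    rw [h]
    ring
  simp [Li2_one, Li2_neg_one] at this
  push_cast
  linarith

theorem threeF2_one_one_half_polylog (z : ℝ) (hz0 : 0 ≤ z) (hz1 : z < 1) :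
    Real.sqrt z * ∑' n : ℕ,
        (poch 1 n) * (poch 1 n) * (poch (1/2) n)
          / ((poch (3/2) n)^2) * (-z) ^ n / (Nat.factorial n) =
      -Li2 (1 / (Real.sqrt z + Real.sqrt (z + 1)))
        + Li2 (-(1 / (Real.sqrt z + Real.sqrt (z + 1))))
        + Real.log (Real.sqrt z + Real.sqrt (z + 1))
            * Real.log ((Real.sqrt z + Real.sqrt (z + 1) - 1)
                / (Real.sqrt z + Real.sqrt (z + 1) + 1))
        + Real.pi^2 / 4 := by
  have hsq := Real.sq_sqrt hz0
  set t := Real.arsinh (Real.sqrt z) with ht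
  have hsinh : Real.sinh t = Real.sqrt z := Real.sinh_arsinh _
  have hexp : Real.exp t = Real.sqrt z + Real.sqrt (z + 1) := by
    rw [ht, Real.exp_arsinh, hsq, add_comm 1 z]
  have ht0 : 0 ≤ t := Real.arsinh_nonneg_iff.2 (Real.sqrt_nonneg z)
  have h1 : Real.sinh t < 1 := by
    rw [hsinh]
    exact (Real.sqrt_lt' one_pos).2 (by simpa using hz1)
  have key := tsum_arsinhDivCoeff_div_eq ht0 h1
  rw [← hexp, one_div (Real.exp t), ← Real.exp_neg, Real.log_exp, ← key, hsinh, ← tsum_mul_left]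
  refine tsum_congr fun n => ?_
  have hp := (poch_pos (a := 1 / 2) (by norm_num) n).ne'
  have hn : (n.factorial : ℝ) ≠ 0 := by positivity
  have h2 : (2 * (n : ℝ) + 1) ≠ 0 := by positivity
  rw [arsinhDivCoeff, poch_one_eq_factorial, poch_three_halves, pow_succ (√z),
    pow_mul (√z), hsq, neg_pow z]
  push_cast
  field_simp
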